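/- Let a satisfy (H) with constant c > 0, and for σ > 0 define a_σ(x) = a(x)/(1 + σ a(x)) + σ. Then a_σ is C¹ on ℝ^N, and for all x ∈ ℝ^N one has σ ≤ a_σ(x) ≤ σ + σ^{−1} and |∇a_σ(x)| ≤ c · a_σ(x)^{1/2}. -/

import Mathlib

open Real

/-!
Write `a_σ = φ ∘ a` with `φ t = t / (1 + σ t) + σ`. Then `φ' t = (1 + σ t)⁻²`, and for `t ≥ 0` and
`0 ≤ p ≤ 2` the factor `(1 + σ t)⁻²` is at most `(1 + σ t)⁻ᵖ`, so
`φ' t * t ^ p ≤ (t / (1 + σ t)) ^ p ≤ φ t ^ p`. The chain rule therefore carries the gradient bound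
from `a` to `a_σ` with the same constant.
-/

lemma norm_gradient {𝕜 F : Type*} [RCLike 𝕜] [NormedAddCommGroup F] [InnerProductSpace 𝕜 F]
    [CompleteSpace F] (f : F → 𝕜) (x : F) : ‖gradient f x‖ = ‖fderiv 𝕜 f x‖ :=
  LinearIsometryEquiv.norm_map _ _

/-- The real function through which `a_σ` factors as `a_σ = regularize σ ∘ a`: for `0 < σ` it maps
`[0, ∞)` into `[σ, σ + σ⁻¹]`, so that `a_σ` is bounded and bounded away from zero. -/
noncomputable def regularize (σ t : ℝ) : ℝ := t / (1 + σ * t) + σ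

section Scalar

variable {σ t : ℝ}

lemma le_regularize (hσ : 0 ≤ σ) (ht : 0 ≤ t) : σ ≤ regularize σ t :=
  le_add_of_nonneg_left (by positivity)

lemma regularize_le (hσ : 0 < σ) (ht : 0 ≤ t) : regularize σ t ≤ σ + σ⁻¹ := by
  have hquot : t / (1 + σ * t) ≤ σ⁻¹ := by
    rw [div_le_iff₀ (by positivity), mul_add, inv_mul_cancel_left₀ hσ.ne', mul_one]
    exact le_add_of_nonneg_left (by positivity)
  rw [regularize, add_comm]
  gcongr

lemma hasDerivAt_regularize (h : 1 + σ * t ≠ 0) :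
    HasDerivAt (regularize σ) ((1 + σ * t) ^ 2)⁻¹ t := by
  have hden : HasDerivAt (fun s => 1 + σ * s) σ t := by
    simpa using ((hasDerivAt_id t).const_mul σ).const_add 1
  refine (((hasDerivAt_id t).div hden h).add_const σ).congr_deriv ?_
  simp only [id_eq]
  field_simp
  ring

lemma inv_sq_mul_rpow_le_regularize_rpow {p : ℝ} (hσ : 0 ≤ σ) (ht : 0 ≤ t) (hp : 0 ≤ p)
    (hp2 : p ≤ 2) : ((1 + σ * t) ^ 2)⁻¹ * t ^ p ≤ regularize σ t ^ p := by
  have hden : 1 ≤ 1 + σ * t := le_add_of_nonneg_right (by positivity)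
  have hpow : (1 + σ * t) ^ p ≤ (1 + σ * t) ^ 2 := by
    simpa only [rpow_two] using rpow_le_rpow_of_exponent_le hden hp2
  calc ((1 + σ * t) ^ 2)⁻¹ * t ^ p
      ≤ ((1 + σ * t) ^ p)⁻¹ * t ^ p := by gcongr
    _ = (t / (1 + σ * t)) ^ p := by
        rw [div_rpow ht (by positivity), inv_mul_eq_div]
    _ ≤ regularize σ t ^ p := by
        gcongr
        exact le_add_of_nonneg_right hσ

end Scalar

section NormedSpace

variable {E : Type*} [NormedAddCommGroup E] [NormedSpace ℝ E] {a : E → ℝ} {σ c p : ℝ} {x : E}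

lemma contDiff_regularize_comp {n : WithTop ℕ∞} (ha : ContDiff ℝ n a)
    (h : ∀ x, 1 + σ * a x ≠ 0) : ContDiff ℝ n (fun x => regularize σ (a x)) :=
  (ha.div (contDiff_const.add (contDiff_const.mul ha)) h).add contDiff_const

lemma fderiv_regularize_comp (ha : DifferentiableAt ℝ a x) (h : 1 + σ * a x ≠ 0) :
    fderiv ℝ (fun y => regularize σ (a y)) x = ((1 + σ * a x) ^ 2)⁻¹ • fderiv ℝ a x :=
  ((hasDerivAt_regularize h).comp_hasFDerivAt x ha.hasFDerivAt).fderiv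

lemma norm_fderiv_regularize_comp_le (hσ : 0 ≤ σ) (hc : 0 ≤ c) (hp : 0 ≤ p) (hp2 : p ≤ 2)
    (ha : DifferentiableAt ℝ a x) (hax : 0 ≤ a x) (hbound : ‖fderiv ℝ a x‖ ≤ c * a x ^ p) :
    ‖fderiv ℝ (fun y => regularize σ (a y)) x‖ ≤ c * regularize σ (a x) ^ p := by
  have hden : 0 < 1 + σ * a x := by positivity
  calc ‖fderiv ℝ (fun y => regularize σ (a y)) x‖
      = ((1 + σ * a x) ^ 2)⁻¹ * ‖fderiv ℝ a x‖ := by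
        rw [fderiv_regularize_comp ha hden.ne', norm_smul, norm_of_nonneg (by positivity)]
    _ ≤ ((1 + σ * a x) ^ 2)⁻¹ * (c * a x ^ p) := by gcongr
    _ = c * (((1 + σ * a x) ^ 2)⁻¹ * a x ^ p) := mul_left_comm _ _ _
    _ ≤ c * regularize σ (a x) ^ p := by
        gcongr
        exact inv_sq_mul_rpow_le_regularize_rpow hσ hax hp hp2

theorem statement16_general {n : WithTop ℕ∞} (hn : n ≠ 0) (hσ : 0 < σ) (hc : 0 ≤ c)
    (hp : 0 ≤ p) (hp2 : p ≤ 2) (ha : ContDiff ℝ n a) (ha_nonneg : ∀ x, 0 ≤ a x)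
    (hbound : ∀ x, ‖fderiv ℝ a x‖ ≤ c * a x ^ p) :
    ContDiff ℝ n (fun x => regularize σ (a x)) ∧
    ∀ x, σ ≤ regularize σ (a x) ∧ regularize σ (a x) ≤ σ + σ⁻¹ ∧
      ‖fderiv ℝ (fun y => regularize σ (a y)) x‖ ≤ c * regularize σ (a x) ^ p := by
  have hden (x : E) : 0 < 1 + σ * a x := by
    have := ha_nonneg x
    positivity
  exact ⟨contDiff_regularize_comp ha fun x => (hden x).ne', fun x =>
    ⟨le_regularize hσ.le (ha_nonneg x), regularize_le hσ (ha_nonneg x),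
      norm_fderiv_regularize_comp_le hσ.le hc hp hp2 (ha.differentiable hn x) (ha_nonneg x)
        (hbound x)⟩⟩

end NormedSpace

theorem statement16 (N : ℕ) (hN : 1 ≤ N)
    (a : EuclideanSpace ℝ (Fin N) → ℝ) (c : ℝ) (hc : 0 < c)
    (ha1 : ContDiff ℝ 1 a) (ha2 : ∀ x, 0 < a x)
    (ha3 : ∀ x, ‖gradient a x‖ ≤ c * (a x) ^ ((1 : ℝ) / 2))
    (σ : ℝ) (hσ : 0 < σ) :
    ContDiff ℝ 1 (fun x => a x / (1 + σ * a x) + σ) ∧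
    ∀ x : EuclideanSpace ℝ (Fin N),
      σ ≤ a x / (1 + σ * a x) + σ ∧
      a x / (1 + σ * a x) + σ ≤ σ + σ⁻¹ ∧
      ‖gradient (fun y => a y / (1 + σ * a y) + σ) x‖ ≤
        c * (a x / (1 + σ * a x) + σ) ^ ((1 : ℝ) / 2) := by
  simp only [norm_gradient] at ha3 ⊢
  exact statement16_general one_ne_zero hσ hc.le (by norm_num) (by norm_num) ha1
    (fun x => (ha2 x).le) ha3
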